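/- Let M be a connected multigraph with m = ‖M‖ edges and let G be a graph on n = |V(G)| vertices. If the family L(M,G) of maximum M-subdivisions in G is pairwise intersecting and m^3 < n, then τ(M,G) ≤ max{5·n^{2/3}, 2·m^2·n^{1/3}}. -/

import Mathlib

open SimpleGraph

/-- A multigraph with vertex type `W` and edge type `F`: each edge has an
unordered pair of endpoints (possibly equal, giving a loop). -/
structure Multigraph (W : Type*) (F : Type*) where
  ends : F → Sym2 W

namespace Multigraph

variable {W F : Type*}

/-- Adjacency in a multigraph. -/
def Adj (M : Multigraph W F) (u v : W) : Prop :=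
  ∃ e : F, M.ends e = s(u, v)

/-- A multigraph is connected if it is nonempty and any two vertices are joined by a walk. -/
def Connected (M : Multigraph W F) : Prop :=
  Nonempty W ∧ ∀ u v : W, Relation.ReflTransGen M.Adj u v

/-- Delete the edge `e` from the multigraph `M`. -/
def deleteEdge (M : Multigraph W F) (e : F) : Multigraph W {f : F // f ≠ e} where
  ends f := M.ends f.1

/-- An edge of a (connected) multigraph is a cut-edge if deleting it disconnects
the multigraph. -/
def IsCutEdge (M : Multigraph W F) (e : F) : Prop :=
  ¬ (M.deleteEdge e).Connected

end Multigraph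

variable {V W F : Type*}

/-- `Q` is (the subgraph realizing) an `M`-subdivision inside the simple graph `G`:
there is an injective placement `b` of the branch vertices of `M`, and for each edge
`e` of `M` with ends `u e`, `v e` a path (a cycle, if `e` is a loop) of `G` joining
`b (u e)` to `b (v e)`; these paths are internally disjoint from each other and from
the branch vertices, are pairwise edge-disjoint, and their union is exactly `Q`. -/
def IsSubdivisionIn (M : Multigraph W F) (G : SimpleGraph V) (Q : G.Subgraph) : Prop :=
  ∃ (b : W → V) (u v : F → W) (P : ∀ e : F, G.Walk (b (u e)) (b (v e))),
    Function.Injective b ∧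
    (∀ e, M.ends e = s(u e, v e)) ∧
    (∀ e, ∀ h : u e = v e, ((P e).copy rfl (congrArg b h.symm)).IsCycle) ∧
    (∀ e, u e ≠ v e → (P e).IsPath) ∧
    (∀ e, ∀ x ∈ (P e).support, x ∈ Set.range b → x = b (u e) ∨ x = b (v e)) ∧
    (∀ e e', e ≠ e' → ∀ x, x ∈ (P e).support → x ∈ (P e').support → x ∈ Set.range b) ∧
    (∀ e e', e ≠ e' → ∀ a, a ∈ (P e).edges → a ∉ (P e').edges) ∧
    Q.verts = Set.range b ∪ ⋃ e, {x | x ∈ (P e).support} ∧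
    (∀ x y, Q.Adj x y ↔ ∃ e, (P e).toSubgraph.Adj x y)

/-- `Q` is a maximum `M`-subdivision among those contained in the subgraph `H` of `G`
(maximum with respect to the number of edges). -/
def IsMaxSubdivisionIn (M : Multigraph W F) (G : SimpleGraph V) (H Q : G.Subgraph) : Prop :=
  IsSubdivisionIn M G Q ∧ Q ≤ H ∧
    ∀ R : G.Subgraph, IsSubdivisionIn M G R → R ≤ H →
      R.edgeSet.ncard ≤ Q.edgeSet.ncard

/-- The family `L(M,H)` of maximum `M`-subdivisions in `H` is pairwise intersecting. -/
def PairwiseIntersectingIn (M : Multigraph W F) (G : SimpleGraph V) (H : G.Subgraph) : Prop :=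
  ∀ Q R : G.Subgraph, IsMaxSubdivisionIn M G H Q → IsMaxSubdivisionIn M G H R →
    (Q.verts ∩ R.verts).Nonempty

/-- `S` is a transversal of the family `L(M,H)` of maximum `M`-subdivisions in `H`. -/
def IsTransversalIn (M : Multigraph W F) (G : SimpleGraph V) (H : G.Subgraph)
    (S : Set V) : Prop :=
  ∀ Q : G.Subgraph, IsMaxSubdivisionIn M G H Q → (S ∩ Q.verts).Nonempty

/-- `(X, Y)` is an `H`-pretransversal: `Y ⊆ X ⊆ V(H)`, `n^{1/3}·|Y| ≤ |X|`
(where `n = |V(G)|`), and every maximum `M`-subdivision `Q` in `H` satisfies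
`Q ⊆ H − X` or `Q ∩ Y ≠ ∅`. -/
def IsPretransversal [Fintype V] (M : Multigraph W F) (G : SimpleGraph V)
    (H : G.Subgraph) (X Y : Set V) : Prop :=
  Y ⊆ X ∧ X ⊆ H.verts ∧
    (Fintype.card V : ℝ) ^ ((1 : ℝ) / 3) * (Y.ncard : ℝ) ≤ (X.ncard : ℝ) ∧
    ∀ Q : G.Subgraph, IsMaxSubdivisionIn M G H Q →
      Q ≤ H.deleteVerts X ∨ (Q.verts ∩ Y).Nonempty

/-- An `A,B`-connector of size `k` inside the subgraph `H` of `G`: `k` pairwise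
vertex-disjoint paths of `H`, each meeting `A` exactly in its first vertex and
meeting `B` exactly in its last vertex. -/
def IsConnector (G : SimpleGraph V) (H : G.Subgraph) (A B : Set V) (k : ℕ) : Prop :=
  ∃ (a : Fin k → V) (b : Fin k → V) (p : ∀ i : Fin k, G.Walk (a i) (b i)),
    (∀ i, (p i).IsPath) ∧
    (∀ i, (p i).toSubgraph ≤ H) ∧
    (∀ i, {x | x ∈ (p i).support} ∩ A = {a i}) ∧
    (∀ i, {x | x ∈ (p i).support} ∩ B = {b i}) ∧
    (∀ i j, i ≠ j → ∀ x, x ∈ (p i).support → x ∉ (p j).support)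

namespace SimpleGraph.Walk

variable {V : Type*} {G : SimpleGraph V}

/-- A walk meeting `S` can be cut off at its first vertex in `S`. -/
lemma exists_walk_to_first (S : Set V) {a b : V} (p : G.Walk a b) (h : ∃ x ∈ p.support, x ∈ S) :
    ∃ x ∈ S, ∃ q : G.Walk a x, q.support ⊆ p.support ∧ ∀ y ∈ q.support, y ∈ S → y = x := by
  induction p with
  | nil => exact ⟨_, by simpa using h, nil, by simp, by simp⟩
  | @cons a c b hadj p ih =>
    by_cases ha : a ∈ S
    · exact ⟨a, ha, nil, by simp, by simp⟩
    · obtain ⟨x, hx, q, hq, hqS⟩ := ih (by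
        obtain ⟨x, hx, hxS⟩ := h
        rw [support_cons, List.mem_cons] at hx
        rcases hx with rfl | hx
        · exact absurd hxS ha
        · exact ⟨x, hx, hxS⟩)
      refine ⟨x, hx, cons hadj q, ?_, ?_⟩
      · simpa using List.subset_cons_of_subset _ hq
      · intro y hy hyS
        rw [support_cons, List.mem_cons] at hy
        rcases hy with rfl | hy
        · exact absurd hyS ha
        · exact hqS y hy hyS

lemma exists_path_to_first (S : Set V) {a b : V} (p : G.Walk a b) (h : ∃ x ∈ p.support, x ∈ S) :
    ∃ x ∈ S, ∃ q : G.Walk a x, q.IsPath ∧ q.support ⊆ p.support ∧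
      ∀ y ∈ q.support, y ∈ S → y = x := by
  classical
  obtain ⟨x, hx, q, hq, hqS⟩ := p.exists_walk_to_first S h
  exact ⟨x, hx, q.bypass, q.bypass_isPath, fun y hy => hq (q.support_bypass_subset_support hy),
    fun y hy => hqS y (q.support_bypass_subset_support hy)⟩

lemma exists_append_getVert {a b : V} (p : G.Walk a b) (i : ℕ) (hi : i ≤ p.length) :
    ∃ (q : G.Walk a (p.getVert i)) (r : G.Walk (p.getVert i) b),
      p = q.append r ∧ q.length = i := by
  refine ⟨p.take i, p.drop i, ?_, by simpa using hi⟩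
  simp

lemma exists_append_append_getVert {a b : V} (p : G.Walk a b) (i j : ℕ) (hij : i ≤ j)
    (hj : j ≤ p.length) :
    ∃ (q : G.Walk a (p.getVert i)) (r : G.Walk (p.getVert i) (p.getVert j))
      (s : G.Walk (p.getVert j) b),
      p = (q.append r).append s ∧ q.length = i ∧ r.length = j - i := by
  obtain ⟨q', s, h, hl⟩ := p.exists_append_getVert j hj
  obtain ⟨q, r, h', hl'⟩ := q'.exists_append_getVert i (by omega)
  have e : q'.getVert i = p.getVert i := by
    conv_rhs => rw [h, getVert_append']
    rw [if_pos (by omega)]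
  refine ⟨q.copy rfl e, r.copy e rfl, s, ?_, by simpa using hl', ?_⟩
  · have : (q.copy rfl e).append (r.copy e rfl) = q.append r := by simp
    rw [this, ← h']
    exact h
  · have := congrArg length h'
    simp at this ⊢
    omega

/-- One augmentation step: given two paths from `w` to `B` sharing only `w`, and a walk from `y`
to `B` avoiding `w`, there are disjoint paths from `w` to `B` and from `y` to `B`. -/
lemma exists_disjoint_of_fan {B S : Set V} {w u v y b : V} {p : G.Walk w u} {q : G.Walk w v}
    {r : G.Walk y b} (hp : p.IsPath) (hq : q.IsPath) (hpS : ∀ x ∈ p.support, x ∈ S)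
    (hqS : ∀ x ∈ q.support, x ∈ S) (hrS : ∀ x ∈ r.support, x ∈ S) (hu : u ∈ B) (hv : v ∈ B)
    (hb : b ∈ B) (hpq : ∀ x ∈ p.support, x ∈ q.support → x = w) (hw : w ∉ r.support) :
    ∃ u' ∈ B, ∃ p' : G.Walk w u', p'.IsPath ∧ (∀ x ∈ p'.support, x ∈ S) ∧
      ∃ b' ∈ B, ∃ r' : G.Walk y b', r'.IsPath ∧ (∀ x ∈ r'.support, x ∈ S) ∧
        ∀ x ∈ p'.support, x ∉ r'.support := by
  classical
  by_cases h : ∃ x ∈ r.support, x ∈ {x | x ∈ p.support ∨ x ∈ q.support}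
  · obtain ⟨x, hx, r', hr', hr'x⟩ := r.exists_walk_to_first _ h
    have hxw : x ≠ w := fun e => hw (hr' (e ▸ r'.end_mem_support))
    have key : ∀ {u v : V} {p : G.Walk w u} {q : G.Walk w v}, p.IsPath → q.IsPath →
        (∀ x ∈ p.support, x ∈ S) → (∀ x ∈ q.support, x ∈ S) → u ∈ B → v ∈ B →
        (∀ x ∈ p.support, x ∈ q.support → x = w) → x ∈ p.support →
        (∀ z ∈ r'.support, z ∈ p.support ∨ z ∈ q.support → z = x) →
        ∃ u' ∈ B, ∃ p' : G.Walk w u', p'.IsPath ∧ (∀ x ∈ p'.support, x ∈ S) ∧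
          ∃ b' ∈ B, ∃ r' : G.Walk y b', r'.IsPath ∧ (∀ x ∈ r'.support, x ∈ S) ∧
            ∀ x ∈ p'.support, x ∉ r'.support := by
      intro u v p q hp hq hpS hqS hu hv hpq hx hr'x
      have hsub : ∀ z ∈ (r'.append (p.dropUntil x hx)).bypass.support,
          z ∈ r'.support ∨ z ∈ (p.dropUntil x hx).support := fun z hz => by
        simpa [mem_support_append_iff] using support_bypass_subset_support _ hz
      refine ⟨v, hv, q, hq, hqS, u, hu, (r'.append (p.dropUntil x hx)).bypass,
        bypass_isPath _, ?_, ?_⟩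
      · intro z hz
        rcases hsub z hz with h | h
        · exact hrS z (hr' h)
        · exact hpS z (support_dropUntil_subset_support _ _ h)
      · intro z hz hz'
        rcases hsub z hz' with h | h
        · obtain rfl := hr'x z h (Or.inr hz)
          exact hxw (hpq z hx hz)
        · have hzw := hpq z (support_dropUntil_subset_support _ _ h) hz
          subst hzw
          have h1 := hp.support_nodup
          rw [← p.take_spec hx, support_append, List.nodup_append'] at h1
          have h2 : z ∈ (p.dropUntil x hx).support.tail := by
            rw [← cons_tail_support, List.mem_cons] at h
            exact h.resolve_left (Ne.symm hxw)
          exact h1.2.2 (start_mem_support _) h2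
    rcases hx with hx | hx
    · exact key hp hq hpS hqS hu hv hpq hx hr'x
    · exact key hq hp hqS hpS hv hu (fun z h1 h2 => hpq z h2 h1) hx
        (fun z h1 h2 => hr'x z h1 h2.symm)
  · push Not at h
    refine ⟨u, hu, p, hp, hpS, b, hb, r.bypass, r.bypass_isPath,
      fun x hx => hrS x (r.support_bypass_subset_support hx), fun x hx hx' => ?_⟩
    exact h x (r.support_bypass_subset_support hx') (Or.inl hx)

/-- Menger's theorem for two paths. -/
theorem exists_two_disjoint_paths [hV : Nonempty V] {A B S : Set V}
    (hA : ∀ a ∈ A, ∀ a' ∈ A, ∃ p : G.Walk a a', ∀ x ∈ p.support, x ∈ A) (hAS : A ⊆ S)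
    (h : ∀ z, ∃ a ∈ A, ∃ b ∈ B, ∃ p : G.Walk a b, (∀ x ∈ p.support, x ∈ S) ∧ z ∉ p.support) :
    ∃ a ∈ A, ∃ a' ∈ A, ∃ b ∈ B, ∃ b' ∈ B, ∃ (p : G.Walk a b) (q : G.Walk a' b'),
      (∀ x ∈ p.support, x ∈ S) ∧ (∀ x ∈ q.support, x ∈ S) ∧
      ∀ x ∈ p.support, x ∉ q.support := by
  have fan : ∀ {w a : V} (p : G.Walk w a), p.IsPath → (∀ x ∈ p.support, x ∈ S) →
      (∀ x ∈ p.support, x ∈ A → x = a) → a ∈ A →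
      (∃ u ∈ B, ∃ v ∈ B, ∃ (q : G.Walk w u) (r : G.Walk w v), q.IsPath ∧ r.IsPath ∧
        (∀ x ∈ q.support, x ∈ S) ∧ (∀ x ∈ r.support, x ∈ S) ∧
        ∀ x ∈ q.support, x ∈ r.support → x = w) →
      (∃ u ∈ B, ∃ v ∈ B, ∃ (q : G.Walk a u) (r : G.Walk a v), q.IsPath ∧ r.IsPath ∧
        (∀ x ∈ q.support, x ∈ S) ∧ (∀ x ∈ r.support, x ∈ S) ∧
        ∀ x ∈ q.support, x ∈ r.support → x = a) := by
    classical
    intro w a p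
    induction p with
    | nil => intro _ _ _ _ h; exact h
    | @cons w y a hadj p ih =>
      intro hp hpS hpA haA ⟨u, hu, v, hv, q, r, hq, hr, hqS, hrS, hqr⟩
      rw [cons_isPath_iff] at hp
      refine ih hp.1 (fun x hx => hpS x (by simp [hx])) (fun x hx => hpA x (by simp [hx])) haA ?_
      obtain ⟨a', ha', b, hb, s, hsS, hws⟩ := h w
      obtain ⟨t, ht⟩ := hA a haA a' ha'
      have hwA : w ∉ A := fun hwA => by
        have := hpA w (by simp) hwA
        exact hp.2 (this ▸ p.end_mem_support)
      obtain ⟨u', hu', q', hq', hq'S, b', hb', r', hr', hr'S, hd⟩ :=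
        exists_disjoint_of_fan (r := (p.append t).append s) hq hr hqS hrS (by
          intro x hx
          simp only [mem_support_append_iff] at hx
          rcases hx with (hx | hx) | hx
          · exact hpS x (by simp [hx])
          · exact hAS (ht x hx)
          · exact hsS x hx) hu hv hb hqr (by
          simp only [mem_support_append_iff]
          rintro ((hx | hx) | hx)
          · exact hp.2 hx
          · exact hwA (ht w hx)
          · exact hws hx)
      have hsub : ∀ x ∈ (cons hadj.symm q').bypass.support, x = y ∨ x ∈ q'.support :=
        fun x hx => by simpa using support_bypass_subset_support _ hx
      refine ⟨u', hu', b', hb', (cons hadj.symm q').bypass, r', bypass_isPath _, hr', ?_, hr'S, ?_⟩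
      · intro x hx
        rcases hsub x hx with rfl | hx
        · exact hpS x (by simp)
        · exact hq'S x hx
      · intro x hx hx'
        rcases hsub x hx with rfl | hx
        · rfl
        · exact absurd hx' (hd x hx)
  obtain ⟨a₀, ha₀, b₀, hb₀, p₀, hp₀S, -⟩ := h hV.some
  obtain ⟨a, ha, p, hp, hpsub, hpA⟩ := p₀.reverse.exists_path_to_first A ⟨a₀, by simp, ha₀⟩
  have hpS : ∀ x ∈ p.support, x ∈ S := fun x hx => hp₀S x (by simpa using hpsub hx)
  obtain ⟨u, hu, v, hv, q, r, hq, hr, hqS, hrS, hqr⟩ := fan p hp hpS hpA ha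
    ⟨b₀, hb₀, b₀, hb₀, nil, nil, by simp, by simp, by simpa using hpS _ p.start_mem_support,
      by simpa using hpS _ p.start_mem_support, by simp⟩
  obtain ⟨a', ha', b, hb, s, hsS, has⟩ := h a
  obtain ⟨u', hu', q', -, hq'S, b', hb', r', -, hr'S, hd⟩ :=
    exists_disjoint_of_fan hq hr hqS hrS hsS hu hv hb hqr has
  exact ⟨a, ha, a', ha', u', hu', b', hb', q', r', hq'S, hr'S, hd⟩

lemma mem_support_of_not_nil {u v w : V} {p : G.Walk u v} (hp : ¬ p.Nil) (hw : w ∈ p.support) :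
    w ∈ G.support := by
  obtain ⟨e, he, x, rfl⟩ := (p.mem_support_iff_exists_mem_edges_of_not_nil hp).1 hw
  exact ⟨x, p.adj_of_mem_edges he⟩

/-- The longer of the two arcs between two vertices of a cycle. -/
lemma IsCycle.exists_long_arc {u : V} {c : G.Walk u u} (hc : c.IsCycle) {i j : ℕ} (hij : i < j)
    (hj : j < c.length) :
    ∃ q : G.Walk (c.getVert i) (c.getVert j), q.IsPath ∧ q.support ⊆ c.support ∧
      q.length = max (j - i) (c.length - (j - i)) := by
  obtain ⟨p₁, p₂, p₃, h, h₁, h₂⟩ := c.exists_append_append_getVert i j hij.le hj.le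
  have hlen := congrArg length h
  simp only [length_append] at hlen
  have hsub : ∀ x, x ∈ p₁.support ∨ x ∈ p₂.support ∨ x ∈ p₃.support → x ∈ c.support := by
    intro x hx
    rw [h]
    simp only [mem_support_append_iff]
    tauto
  rcases le_total (c.length - (j - i)) (j - i) with hle | hle
  · refine ⟨p₂, ?_, fun x hx => hsub x (by tauto), by omega⟩
    rw [h] at hc
    refine IsPath.of_append_right (p := p₁) (hc.isPath_of_append_left ?_)
    rw [not_nil_iff_lt_length]
    omega
  · refine ⟨(p₃.append p₁).reverse, ?_, fun x hx => ?_, ?_⟩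
    · rw [isPath_reverse_iff, isPath_def, support_append, ← cons_tail_support p₃]
      have hnd := hc.support_nodup
      rw [h, tail_support_append, tail_support_append] at hnd
      have hmem : c.getVert j ∈ p₂.support.tail := by
        have := p₂.end_mem_support
        rw [← cons_tail_support, List.mem_cons] at this
        refine this.resolve_left fun e => ?_
        have := hc.getVert_injOn' (by simp; omega) (by simp; omega) e
        omega
      simp only [List.nodup_append', List.cons_append, List.nodup_cons, List.mem_append] at hnd ⊢
      refine ⟨?_, hnd.2.1, hnd.1.1, fun x h₁ h₂ => hnd.2.2 (List.mem_append_left _ h₂) h₁⟩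
      rintro (h' | h')
      · exact hnd.2.2 (List.mem_append_right _ hmem) h'
      · exact hnd.1.2.2 h' hmem
    · simp only [support_reverse, List.mem_reverse, mem_support_append_iff] at hx
      exact hsub x (by tauto)
    · simp only [length_reverse, length_append]
      omega

lemma IsPath.start_notMem_support_tail {a b : V} {p : G.Walk a b} (hp : p.IsPath) :
    a ∉ p.support.tail := by
  have := hp.support_nodup
  rw [← cons_tail_support] at this
  exact (List.nodup_cons.1 this).1

/-- Two paths with the same two distinct ends and no other common vertex form a cycle. -/
lemma IsPath.isCycle_append_reverse {x y : V} {d q : G.Walk x y} (hd : d.IsPath) (hq : q.IsPath)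
    (hdq : ∀ z ∈ d.support, z ∈ q.support → z = x ∨ z = y) (h : 1 < q.length) :
    (d.append q.reverse).IsCycle := by
  refine hd.isCycle_append hq.reverse ?_ (Or.inr (by simpa using h))
  intro z hz hz'
  rcases hdq z (List.mem_of_mem_tail hz) (by simpa using List.mem_of_mem_tail hz') with rfl | rfl
  · exact hd.start_notMem_support_tail hz
  · exact hq.reverse.start_notMem_support_tail hz'

/-- A walk shortcutting a cycle yields a shorter cycle that is still more than half as long. -/
lemma IsCycle.exists_shorter_of_shortcut {u : V} {c : G.Walk u u} (hc : c.IsCycle) (n : ℕ) :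
    ∀ {i j : ℕ} (p : G.Walk (c.getVert i) (c.getVert j)), i < j → j < c.length → p.length ≤ n →
      p.length < j - i → p.length < c.length - (j - i) →
      ∃ (v : V) (c' : G.Walk v v), c'.IsCycle ∧ c'.length < c.length ∧
        c.length + 2 ≤ 2 * c'.length := by
  classical
  induction n using Nat.strong_induction_on with
  | _ n ih =>
    intro i j p hij hj hpn h₁ h₂
    have inj : ∀ {a b : ℕ}, a < c.length → b < c.length → c.getVert a = c.getVert b → a = b :=
      fun ha hb e => hc.getVert_injOn' (by simp; omega) (by simp; omega) e
    have hb := p.length_bypass_le_length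
    by_cases hear : ∀ z ∈ p.bypass.support, z ∈ c.support → z = c.getVert i ∨ z = c.getVert j
    · obtain ⟨q, hq, hqc, hql⟩ := hc.exists_long_arc hij hj
      have h3 := hc.three_le_length
      have h0 : 0 < p.bypass.length := by
        by_contra h
        have := inj (by omega) hj (eq_of_length_eq_zero (p := p.bypass) (by omega))
        omega
      refine ⟨_, _, p.bypass_isPath.isCycle_append_reverse hq
        (fun z hz hz' => hear z hz (hqc hz')) (by omega), ?_, ?_⟩ <;>
      · simp only [length_append, length_reverse]
        omega
    · push Not at hear
      obtain ⟨z, hz, hzc, hzi, hzj⟩ := hear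
      obtain ⟨k, rfl, hk⟩ := mem_support_iff_exists_getVert.1 hzc
      have hlast : ∃ k' < c.length, c.getVert k' = c.getVert k := by
        rcases hk.lt_or_eq with h | rfl
        · exact ⟨k, h, rfl⟩
        · exact ⟨0, by omega, by simp⟩
      obtain ⟨k', hk', e⟩ := hlast
      rw [← e] at hz hzi hzj
      have hki : k' ≠ i := fun h => hzi (by rw [h])
      have hkj : k' ≠ j := fun h => hzj (by rw [h])
      obtain ⟨p₁, p₂, hl₁, hl₂, hl⟩ : ∃ (p₁ : G.Walk (c.getVert i) (c.getVert k'))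
          (p₂ : G.Walk (c.getVert k') (c.getVert j)), p₁.length < p.bypass.length ∧
          p₂.length < p.bypass.length ∧ p₁.length + p₂.length = p.bypass.length :=
        ⟨_, _, length_takeUntil_lt_length hz hzj, length_dropUntil_lt_length hz hzi, by
          rw [← length_append, take_spec]⟩
      have lt₁ : p₁.length < n := by omega
      have lt₂ : p₂.length < n := by omega
      rcases lt_or_gt_of_ne hki with hki | hki
      · by_cases h : p₁.length < i - k' ∧ p₁.length < c.length - (i - k')
        · exact ih _ lt₁ p₁.reverse hki (by omega) (by simp) (by simpa using h.1) (by simpa using h.2)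
        · exact ih _ lt₂ p₂ (by omega) hj le_rfl (by omega) (by omega)
      · by_cases h : p₁.length < k' - i ∧ p₁.length < c.length - (k' - i)
        · exact ih _ lt₁ p₁ hki hk' le_rfl h.1 h.2
        · rcases lt_or_gt_of_ne hkj with hkj | hkj
          · exact ih _ lt₂ p₂ hkj hj le_rfl (by omega) (by omega)
          · exact ih _ lt₂ p₂.reverse hkj hk' (by simp) (by rw [length_reverse]; omega)
              (by rw [length_reverse]; omega)

end SimpleGraph.Walk

namespace SimpleGraph

variable {V : Type*} [Fintype V] {G : SimpleGraph V}

/-- If all separators of `A` and `B` are large, then there is a short walk from `A` to `B`, because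
the distance layers around `A` cannot all be large. -/
lemma exists_short_walk_of_expansion {A B : Finset V} {N : ℝ} {g : ℕ} (hg : 0 < g)
    (hn : N * Fintype.card V ≤ (g : ℝ) * g) (hN : 0 ≤ N)
    (hexp : ∀ Z : Finset V, (∀ a ∈ A, ∀ b ∈ B, ∀ p : G.Walk a b, ∃ z ∈ Z, z ∈ p.support) →
      (g : ℝ) < N * Z.card) :
    ∃ a ∈ A, ∃ b ∈ B, ∃ p : G.Walk a b, p.length + 2 ≤ g := by
  classical
  by_contra! hfar
  let R : ℕ → V → Prop := fun k v => ∃ a ∈ A, ∃ p : G.Walk a v, p.length ≤ k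
  let D : ℕ → Finset V := fun k => {v | R k v ∧ ∀ l < k, ¬ R l v}
  have meet : ∀ {x b : V} (p : G.Walk x b) (k : ℕ), R k x → (∀ l < k, ¬ R l b) →
      ∃ z ∈ D k, z ∈ p.support := by
    intro x b p
    induction p with
    | nil => exact fun k hx hb => ⟨_, by simpa [D] using ⟨hx, hb⟩, by simp⟩
    | @cons x y b hadj p ih =>
      intro k hx hb
      by_cases hy : R k y
      · obtain ⟨z, hz, hzp⟩ := ih k hy hb
        exact ⟨z, hz, by simp [hzp]⟩
      · refine ⟨x, ?_, by simp⟩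
        simp only [D, Finset.mem_filter, Finset.mem_univ, true_and]
        refine ⟨hx, fun l hl ⟨a, ha, q, hq⟩ => hy ⟨a, ha, q.concat hadj, ?_⟩⟩
        rw [Walk.length_concat]
        omega
  have hD : ∀ k ∈ Finset.range g, (g : ℝ) < N * (D k).card := by
    intro k hk
    refine hexp _ fun a ha b hb p => meet p k ⟨a, ha, .nil, by simp⟩ fun l hl ⟨a', ha', q, hq⟩ => ?_
    have := hfar a' ha' b hb q
    have := Finset.mem_range.1 hk
    omega
  have hdisj : ∀ i ∈ Finset.range g, ∀ j ∈ Finset.range g, i ≠ j → Disjoint (D i) (D j) := by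
    intro i _ j _ hij
    rw [Finset.disjoint_left]
    intro v hi hj
    simp only [D, Finset.mem_filter, Finset.mem_univ, true_and] at hi hj
    rcases lt_or_gt_of_ne hij with h | h
    · exact hj.2 i h hi.1
    · exact hi.2 j h hj.1
  have hsum := Finset.sum_lt_sum_of_nonempty (Finset.nonempty_range_iff.2 hg.ne') hD
  rw [Finset.sum_const, Finset.card_range, nsmul_eq_mul, ← Finset.mul_sum, ← Nat.cast_sum,
    ← Finset.card_biUnion hdisj] at hsum
  have : (((Finset.range g).biUnion D).card : ℝ) ≤ Fintype.card V :=
    Nat.cast_le.2 (Finset.card_le_univ _)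
  nlinarith

/-- In a graph whose separations are unbalanced, a long cycle can be replaced by one of bounded
length. -/
lemma exists_cycle_length_between {T : Set V} (hT : G.support ⊆ T) {N : ℝ} {g K : ℕ} (hg : 0 < g)
    (hn : N * Fintype.card V ≤ (g : ℝ) * g) (hN : 0 ≤ N)
    (hexp : ∀ A B Z : Finset V, A.Nonempty → B.Nonempty → ↑A ⊆ T → ↑B ⊆ T →
      (∀ a ∈ A, ∀ b ∈ B, ∀ p : G.Walk a b, ∃ z ∈ Z, z ∈ p.support) →
      (A.card : ℝ) < N * Z.card ∨ (B.card : ℝ) < N * Z.card)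
    (hc : ∃ (v : V) (c : G.Walk v v), c.IsCycle ∧ K ≤ c.length) :
    ∃ (v : V) (c : G.Walk v v), c.IsCycle ∧ K ≤ c.length ∧
      (c.length + 3 ≤ 2 * K ∨ c.length + 5 ≤ 4 * g) := by
  classical
  have hex : ∃ (l : ℕ) (v : V) (c : G.Walk v v), c.IsCycle ∧ K ≤ c.length ∧ c.length = l := by
    obtain ⟨v, c, h⟩ := hc
    exact ⟨_, v, c, h.1, h.2, rfl⟩
  obtain ⟨v, c, hc, hK, hl⟩ := Nat.find_spec hex
  have hmin : ∀ (v : V) (c' : G.Walk v v), c'.IsCycle → K ≤ c'.length → c.length ≤ c'.length :=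
    fun v c' h h' => hl ▸ Nat.find_min' hex ⟨v, c', h, h', rfl⟩
  refine ⟨v, c, hc, hK, ?_⟩
  by_contra! hlong
  have h3 := hc.three_le_length
  have hcard : ∀ a : ℕ, a + g ≤ c.length →
      ((Finset.Ico a (a + g)).image c.getVert).card = g := by
    intro a ha
    rw [Finset.card_image_of_injOn, Nat.card_Ico, Nat.add_sub_cancel_left]
    intro i hi j hj e
    simp only [Finset.coe_Ico, Set.mem_Ico] at hi hj
    exact hc.getVert_injOn' (by simp; omega) (by simp; omega) e
  have hne : ∀ a : ℕ, ((Finset.Ico a (a + g)).image c.getVert).Nonempty :=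
    fun a => (Finset.nonempty_Ico.2 (by omega)).image _
  have hsub : ∀ a : ℕ, ↑((Finset.Ico a (a + g)).image c.getVert) ⊆ T := by
    intro a x hx
    obtain ⟨i, -, rfl⟩ := Finset.mem_image.1 (Finset.mem_coe.1 hx)
    exact hT (Walk.mem_support_of_not_nil hc.not_nil (c.getVert_mem_support i))
  obtain ⟨a, ha, b, hb, p, hp⟩ := exists_short_walk_of_expansion
    (A := (Finset.Ico 0 (0 + g)).image c.getVert)
    (B := (Finset.Ico (2 * g - 2) (2 * g - 2 + g)).image c.getVert) hg hn hN fun Z hZ => by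
      have := hexp _ _ Z (hne _) (hne _) (hsub _) (hsub _) hZ
      rw [hcard _ (by omega), hcard _ (by omega)] at this
      simpa using this
  obtain ⟨i, hi, rfl⟩ := Finset.mem_image.1 ha
  obtain ⟨j, hj, rfl⟩ := Finset.mem_image.1 hb
  rw [Finset.mem_Ico] at hi hj
  obtain ⟨w, c', hc', hlt, hle⟩ := hc.exists_shorter_of_shortcut _ p (by omega) (by omega) le_rfl
    (by omega) (by omega)
  have := hmin w c' hc' (by omega)
  omega

end SimpleGraph

namespace SimpleGraph

variable {V : Type*} {G : SimpleGraph V}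

/-- The vertices that can be reached outside `l` from a member of `𝓛` avoiding `l`. -/
def bigSide (G : SimpleGraph V) (𝓛 : Set (Set V)) (l : List V) : Set V :=
  {v | ∃ Q ∈ 𝓛, (∀ z ∈ l, z ∉ Q) ∧ ∃ q ∈ Q, ∃ p : G.Walk q v, ∀ x ∈ p.support, x ∉ l}

section bigSide

variable {𝓛 : Set (Set V)} {l l' : List V} {v w : V}

lemma notMem_of_mem_bigSide (hv : v ∈ G.bigSide 𝓛 l) : v ∉ l := by
  obtain ⟨Q, hQ, hQl, q, hq, p, hp⟩ := hv
  exact hp v p.end_mem_support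

lemma bigSide_congr (h : ∀ x, x ∈ l ↔ x ∈ l') : G.bigSide 𝓛 l = G.bigSide 𝓛 l' := by
  simp only [bigSide, h]

lemma bigSide_anti (h : l ⊆ l') : G.bigSide 𝓛 l' ⊆ G.bigSide 𝓛 l :=
  fun _ ⟨Q, hQ, hQl, q, hq, p, hp⟩ =>
    ⟨Q, hQ, fun z hz => hQl z (h hz), q, hq, p, fun x hx hxl => hp x hx (h hxl)⟩

lemma mem_bigSide_of_walk (hv : v ∈ G.bigSide 𝓛 l) (p : G.Walk v w)
    (hp : ∀ x ∈ p.support, x ∉ l) : w ∈ G.bigSide 𝓛 l := by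
  obtain ⟨Q, hQ, hQl, q, hq, r, hr⟩ := hv
  refine ⟨Q, hQ, hQl, q, hq, r.append p, fun x hx => ?_⟩
  rw [Walk.mem_support_append_iff] at hx
  exact hx.elim (hr x) (hp x)

lemma mem_bigSide_of_adj (hv : v ∈ G.bigSide 𝓛 l) (h : G.Adj v w) (hw : w ∉ l) :
    w ∈ G.bigSide 𝓛 l :=
  mem_bigSide_of_walk hv h.toWalk (by simp [hw, notMem_of_mem_bigSide hv])

lemma subset_bigSide {Q : Set V} (hQ : Q ∈ 𝓛) (h : ∀ z ∈ l, z ∉ Q) : Q ⊆ G.bigSide 𝓛 l :=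
  fun q hq => ⟨Q, hQ, h, q, hq, .nil, by simpa using fun hql => h q hql hq⟩

/-- `bigSide` is connected. -/
lemma exists_walk_bigSide
    (hconn : ∀ Q ∈ 𝓛, ∀ x ∈ Q, ∀ y ∈ Q, ∃ p : G.Walk x y, ∀ z ∈ p.support, z ∈ Q)
    (hint : ∀ Q ∈ 𝓛, ∀ R ∈ 𝓛, (Q ∩ R).Nonempty)
    (hv : v ∈ G.bigSide 𝓛 l) (hw : w ∈ G.bigSide 𝓛 l) :
    ∃ p : G.Walk v w, ∀ x ∈ p.support, x ∈ G.bigSide 𝓛 l := by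
  classical
  suffices ∃ p : G.Walk v w, ∀ x ∈ p.support, x ∉ l by
    obtain ⟨p, hp⟩ := this
    exact ⟨p, fun x hx => mem_bigSide_of_walk hv (p.takeUntil x hx) fun y hy =>
      hp y (p.support_takeUntil_subset_support hx hy)⟩
  obtain ⟨Q, hQ, hQl, q, hq, p, hp⟩ := hv
  obtain ⟨R, hR, hRl, r, hr, p', hp'⟩ := hw
  obtain ⟨x, hxQ, hxR⟩ := hint Q hQ R hR
  obtain ⟨t, ht⟩ := hconn Q hQ q hq x hxQ
  obtain ⟨t', ht'⟩ := hconn R hR x hxR r hr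
  refine ⟨p.reverse.append (t.append (t'.append p')), fun y hy hyl => ?_⟩
  simp only [Walk.mem_support_append_iff, Walk.support_reverse, List.mem_reverse] at hy
  rcases hy with hy | hy | hy | hy
  · exact hp y hy hyl
  · exact hQl y hyl (ht y hy)
  · exact hRl y hyl (ht' y hy)
  · exact hp' y hy hyl

lemma bigSide_subset_of_boundary
    (hconn : ∀ Q ∈ 𝓛, ∀ x ∈ Q, ∀ y ∈ Q, ∃ p : G.Walk x y, ∀ z ∈ p.support, z ∈ Q)
    (hint : ∀ Q ∈ 𝓛, ∀ R ∈ 𝓛, (Q ∩ R).Nonempty)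
    (hl : ∃ Q ∈ 𝓛, ∀ z ∈ l, z ∉ Q)
    (h : ∀ v ∈ G.bigSide 𝓛 l, ∀ w, G.Adj v w → w ∉ G.bigSide 𝓛 l → w ∈ l') :
    G.bigSide 𝓛 l' ⊆ G.bigSide 𝓛 l := by
  have stay : ∀ {v w : V} (p : G.Walk v w), v ∈ G.bigSide 𝓛 l → (∀ x ∈ p.support, x ∉ l') →
      w ∈ G.bigSide 𝓛 l := by
    intro v w p
    induction p with
    | nil => exact fun hv _ => hv
    | @cons v u w hadj p ih =>
      intro hv hp
      refine ih ?_ fun x hx => hp x (by simp [hx])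
      by_contra hu
      exact hp u (by simp) (h v hv u hadj hu)
  rintro v ⟨Q, hQ, hQl, q, hq, p, hp⟩
  obtain ⟨R, hR, hRl⟩ := hl
  obtain ⟨x, hxQ, hxR⟩ := hint Q hQ R hR
  obtain ⟨t, ht⟩ := hconn Q hQ x hxQ q hq
  exact stay p (stay t (subset_bigSide hR hRl hxR) fun y hy hyl => hQl y hyl (ht y hy)) hp

/-- A pairwise intersecting family of connected sets without a hitting set of size at most `s`
forces a cycle longer than `s`. -/
theorem exists_long_cycle [Finite V]
    (hconn : ∀ Q ∈ 𝓛, ∀ x ∈ Q, ∀ y ∈ Q, ∃ p : G.Walk x y, ∀ z ∈ p.support, z ∈ Q)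
    (hint : ∀ Q ∈ 𝓛, ∀ R ∈ 𝓛, (Q ∩ R).Nonempty)
    {s : ℕ} (hs : 2 ≤ s)
    (hhit : ∀ l : List V, l.length ≤ s → ∃ Q ∈ 𝓛, ∀ z ∈ l, z ∉ Q) :
    ∃ (v : V) (c : G.Walk v v), c.IsCycle ∧ s + 1 ≤ c.length := by
  classical
  let f : (Σ x y : V, G.Walk x y) → ℕ := fun p =>
    (G.bigSide 𝓛 p.2.2.support).ncard * (s + 1) + p.2.2.length
  let P : Set (Σ x y : V, G.Walk x y) := {p | p.2.2.IsPath ∧ p.2.2.length + 1 ≤ s}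
  have hP : P.Nonempty := by
    obtain ⟨Q, hQ, -⟩ := hhit [] (by simp)
    obtain ⟨x, -⟩ := hint Q hQ Q hQ
    exact ⟨⟨x, x, .nil⟩, by simp, by simp; omega⟩
  obtain ⟨⟨x, y, p⟩, ⟨hp, hps⟩, hmin⟩ := exists_minimalFor_of_wellFoundedLT (· ∈ P) f hP
  simp only at hp hps
  replace hmin : ∀ {a b : V} (q : G.Walk a b), q.IsPath → q.length + 1 ≤ s →
      f ⟨x, y, p⟩ ≤ f ⟨a, b, q⟩ := fun q hq hqs => by
    by_contra! hlt
    exact absurd (hmin (j := ⟨_, _, q⟩) ⟨hq, hqs⟩ hlt.le) hlt.not_ge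
  have hlt : ∀ {a b c d : V} (q : G.Walk a b) (r : G.Walk c d) (v : V), r.length + 1 ≤ s →
      G.bigSide 𝓛 r.support ⊆ G.bigSide 𝓛 q.support → v ∈ G.bigSide 𝓛 q.support →
      v ∈ r.support → f ⟨c, d, r⟩ < f ⟨a, b, q⟩ := by
    intro a b c d q r v hr hsub hv hvr
    have := Set.ncard_lt_ncard (Set.ssubset_iff_of_subset hsub |>.2
      ⟨v, hv, fun h => notMem_of_mem_bigSide h hvr⟩) (Set.toFinite _)
    simp only [f]
    nlinarith
  have hmem : ∀ {a b : V} (q : G.Walk a b), q.length + 1 ≤ s →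
      ∃ Q ∈ 𝓛, ∀ z ∈ q.support, z ∉ Q := fun q hq => hhit _ (by simpa using hq)
  have hstart : ∀ {a b : V} (q : G.Walk a b), q.IsPath → q.length + 1 ≤ s →
      f ⟨a, b, q⟩ ≤ f ⟨x, y, p⟩ → s ≤ q.length + 1 ∧ ∃ v ∈ G.bigSide 𝓛 q.support, G.Adj a v := by
    intro a b q hq hqs hqf
    have hadj : ∃ v ∈ G.bigSide 𝓛 q.support, G.Adj a v := by
      by_contra! hno
      cases q with
      | nil =>
        obtain ⟨Q, hQ, hQa⟩ := hmem _ hqs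
        obtain ⟨v, hv, -⟩ := hint Q hQ Q hQ
        have hv' := subset_bigSide (G := G) hQ hQa hv
        have := hlt (.nil : G.Walk a a) (.nil : G.Walk v v) v (by simpa using by omega)
          (bigSide_subset_of_boundary hconn hint ⟨Q, hQ, hQa⟩ fun w hw u hwu hu => by
            have : u ∈ (Walk.nil : G.Walk a a).support :=
              by_contra fun h => hu (mem_bigSide_of_adj hw hwu h)
            rw [Walk.support_nil, List.mem_singleton] at this
            exact absurd (this ▸ hwu.symm) (hno w hw)) hv' (by simp)
        exact absurd (hmin (.nil : G.Walk v v) (by simp) (by simpa using by omega)) (by omega)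
      | @cons _ c _ hac q =>
        have hsub : G.bigSide 𝓛 q.support ⊆ G.bigSide 𝓛 (Walk.cons hac q).support :=
          bigSide_subset_of_boundary hconn hint (hmem _ hqs) fun w hw u hwu hu => by
            have : u ∈ (Walk.cons hac q).support :=
              by_contra fun h => hu (mem_bigSide_of_adj hw hwu h)
            rw [Walk.support_cons, List.mem_cons] at this
            refine this.resolve_left ?_
            rintro rfl
            exact hno w hw hwu.symm
        have := Set.ncard_le_ncard hsub (Set.toFinite _)
        rw [Walk.length_cons] at hqs
        have hq' := hmin q (Walk.cons_isPath_iff _ _ |>.1 hq).1 (by omega)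
        simp only [f, Walk.length_cons] at hq' hqf
        nlinarith
    refine ⟨?_, hadj⟩
    by_contra! hlong
    obtain ⟨v, hv, hav⟩ := hadj
    have hvq := notMem_of_mem_bigSide hv
    have h1 := hlt q (.cons hav.symm q) v (by rw [Walk.length_cons]; omega)
      (bigSide_anti (by simp)) hv (by simp)
    have h2 := hmin (.cons hav.symm q) ((Walk.cons_isPath_iff _ _).2 ⟨hq, hvq⟩)
      (by rw [Walk.length_cons]; omega)
    omega
  obtain ⟨hlen, v, hv, hxv⟩ := hstart p hp hps le_rfl
  have hrev : G.bigSide 𝓛 p.reverse.support = G.bigSide 𝓛 p.support := bigSide_congr (by simp)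
  obtain ⟨-, w, hw, hyw⟩ := hstart p.reverse hp.reverse (by simpa using hps) (by
    simp only [f, hrev, Walk.length_reverse, le_refl])
  rw [hrev] at hw
  obtain ⟨t, ht⟩ := exists_walk_bigSide hconn hint hv hw
  have htp : ∀ z ∈ t.bypass.support, z ∉ p.support := fun z hz =>
    notMem_of_mem_bigSide (ht z (t.support_bypass_subset_support hz))
  have hd : (Walk.cons hxv (t.bypass.concat hyw.symm)).IsPath := by
    rw [Walk.cons_isPath_iff]
    refine ⟨t.bypass_isPath.concat (fun h => htp y h p.end_mem_support) _, ?_⟩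
    rw [Walk.support_concat, List.mem_append, List.mem_singleton]
    rintro (h | rfl)
    · exact htp x h p.start_mem_support
    · have := (Walk.isPath_iff_nil.1 hp).length_eq_zero
      omega
  refine ⟨x, _, hp.isCycle_append_reverse hd ?_ (by simp), ?_⟩
  · intro z hz hz'
    simp only [Walk.support_cons, Walk.support_concat, List.mem_cons, List.mem_append,
      List.not_mem_nil, or_false] at hz'
    rcases hz' with h | h | h
    · exact Or.inl h
    · exact absurd hz (htp z h)
    · exact Or.inr h
  · simp only [Walk.length_append, Walk.length_reverse, Walk.length_cons, Walk.length_concat]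
    omega

end bigSide

end SimpleGraph

namespace SimpleGraph.Walk

variable {V : Type*} {G : SimpleGraph V}

lemma isCycle_copy_iff {a b : V} (p : G.Walk a b) (h : b = a) :
    (p.copy rfl h).IsCycle ↔ 3 ≤ p.length ∧ p.support.tail.Nodup := by
  subst h
  rw [copy_rfl_rfl, isCycle_iff_isPath_tail_and_le_length, and_comm]
  refine and_congr_right fun hl => ?_
  rw [isPath_def, support_tail_of_not_nil]
  rw [not_nil_iff_lt_length]
  omega

section replace

variable {a x y b : V} {p : G.Walk a x} {q d : G.Walk x y} {r : G.Walk y b}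

lemma support_tail_nodup_replace (h : ((p.append q).append r).support.tail.Nodup)
    (hq : 0 < q.length) (hd : d.IsPath)
    (hdp : ∀ z ∈ d.support, z ∈ p.support ∨ z ∈ r.support → z = x ∨ z = y) :
    ((p.append d).append r).support.tail.Nodup := by
  rw [tail_support_append, tail_support_append] at h ⊢
  have hy := end_mem_tail_support (not_nil_iff_lt_length.2 hq)
  have hx := hd.start_notMem_support_tail
  have hd' : d.support.tail.Nodup := hd.support_nodup.tail
  have key : ∀ z ∈ d.support.tail, z ∈ p.support ∨ z ∈ r.support → z = y := by
    intro z hz hz'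
    refine (hdp z (List.mem_of_mem_tail hz) hz').resolve_left ?_
    rintro rfl
    exact hx hz
  simp only [List.nodup_append', List.disjoint_append_left] at h ⊢
  refine ⟨⟨h.1.1, hd', fun z hz hz' => ?_⟩, h.2.1, h.2.2.1, fun z hz hz' => ?_⟩
  · obtain rfl := key z hz' (Or.inl (List.mem_of_mem_tail hz))
    exact h.1.2.2 hz hy
  · obtain rfl := key z hz (Or.inr (List.mem_of_mem_tail hz'))
    exact h.2.2.2 hy hz'

lemma IsPath.replace (h : ((p.append q).append r).IsPath) (hq : 0 < q.length) (hd : d.IsPath)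
    (hdp : ∀ z ∈ d.support, z ∈ p.support ∨ z ∈ r.support → z = x ∨ z = y) :
    ((p.append d).append r).IsPath := by
  have ha := h.start_notMem_support_tail
  rw [isPath_def, ← cons_tail_support, List.nodup_cons]
  refine ⟨?_, support_tail_nodup_replace h.support_nodup.tail hq hd hdp⟩
  simp only [tail_support_append, List.mem_append, not_or] at ha ⊢
  refine ⟨⟨ha.1.1, fun had => ?_⟩, ha.2⟩
  rcases hdp a (List.mem_of_mem_tail had) (Or.inl p.start_mem_support) with rfl | rfl
  · exact hd.start_notMem_support_tail had
  · exact ha.1.2 (end_mem_tail_support (not_nil_iff_lt_length.2 hq))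

end replace

end SimpleGraph.Walk

/-- The data of an `M`-subdivision in `G`. -/
structure Subdivision (M : Multigraph W F) (G : SimpleGraph V) where
  b : W → V
  u : F → W
  v : F → W
  P : ∀ e : F, G.Walk (b (u e)) (b (v e))
  injective : Function.Injective b
  ends_eq : ∀ e, M.ends e = s(u e, v e)
  isCycle : ∀ e, ∀ h : u e = v e, ((P e).copy rfl (congrArg b h.symm)).IsCycle
  isPath : ∀ e, u e ≠ v e → (P e).IsPath
  eq_of_branch : ∀ e, ∀ x ∈ (P e).support, x ∈ Set.range b → x = b (u e) ∨ x = b (v e)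
  mem_range_of_ne : ∀ e e', e ≠ e' → ∀ x, x ∈ (P e).support → x ∈ (P e').support → x ∈ Set.range b
  edges_disjoint : ∀ e e', e ≠ e' → ∀ a, a ∈ (P e).edges → a ∉ (P e').edges

namespace Subdivision

variable {M : Multigraph W F} {G : SimpleGraph V} (D : Subdivision M G)

/-- The subgraph formed by a subdivision. -/
def toSubgraph : G.Subgraph where
  verts := Set.range D.b ∪ ⋃ e, {x | x ∈ (D.P e).support}
  Adj x y := ∃ e, (D.P e).toSubgraph.Adj x y
  adj_sub := fun ⟨_, h⟩ => h.adj_sub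
  edge_vert := fun ⟨e, h⟩ => Or.inr (Set.mem_iUnion.2
    ⟨e, (D.P e).mem_verts_toSubgraph.1 ((D.P e).toSubgraph.edge_vert h)⟩)
  symm := ⟨fun _ _ ⟨e, h⟩ => ⟨e, h.symm⟩⟩

lemma b_mem_verts (w : W) : D.b w ∈ D.toSubgraph.verts := Or.inl ⟨w, rfl⟩

lemma mem_verts_of_mem_support {e : F} {x : V} (hx : x ∈ (D.P e).support) :
    x ∈ D.toSubgraph.verts := Or.inr (Set.mem_iUnion.2 ⟨e, hx⟩)

lemma isSubdivisionIn_toSubgraph : IsSubdivisionIn M G D.toSubgraph :=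
  ⟨D.b, D.u, D.v, D.P, D.injective, D.ends_eq, D.isCycle, D.isPath, D.eq_of_branch,
    D.mem_range_of_ne, D.edges_disjoint, rfl, fun _ _ => Iff.rfl⟩

end Subdivision

lemma IsSubdivisionIn.exists_eq_toSubgraph {M : Multigraph W F} {G : SimpleGraph V}
    {Q : G.Subgraph} (h : IsSubdivisionIn M G Q) : ∃ D : Subdivision M G, D.toSubgraph = Q := by
  obtain ⟨b, u, v, P, h₁, h₂, h₃, h₄, h₅, h₆, h₇, hverts, hadj⟩ := h
  refine ⟨⟨b, u, v, P, h₁, h₂, h₃, h₄, h₅, h₆, h₇⟩, ?_⟩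
  ext x y
  · rw [hverts]
    rfl
  · rw [hadj]
    rfl

namespace Subdivision

variable {M : Multigraph W F} {G : SimpleGraph V} (D : Subdivision M G)

lemma edges_nodup (e : F) : (D.P e).edges.Nodup := by
  by_cases h : D.u e = D.v e
  · simpa using (D.isCycle e h).edges_nodup
  · exact (D.isPath e h).edges_nodup

lemma ncard_edgeSet [Fintype F] :
    D.toSubgraph.edgeSet.ncard = ∑ e, (D.P e).length := by
  classical
  have : D.toSubgraph.edgeSet = ↑(Finset.univ.biUnion fun e => (D.P e).edges.toFinset) := by
    ext a
    induction a with
    | _ x y => simp [toSubgraph, Walk.adj_toSubgraph_iff_mem_edges]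
  rw [this, Set.ncard_coe_finset, Finset.card_biUnion]
  · refine Finset.sum_congr rfl fun e _ => ?_
    rw [List.toFinset_card_of_nodup (D.edges_nodup e), Walk.length_edges]
  · intro e _ e' _ h
    refine Finset.disjoint_left.2 fun a ha ha' => ?_
    exact D.edges_disjoint e e' h a (List.mem_toFinset.1 ha) (List.mem_toFinset.1 ha')

/-- Replacing a segment of a subdivided edge by a path that is otherwise disjoint from the
subdivision. -/
lemma exists_reroute [Fintype F] {e : F} {x y : V} {p : G.Walk (D.b (D.u e)) x} {q d : G.Walk x y}
    {r : G.Walk y (D.b (D.v e))} (hP : D.P e = (p.append q).append r) (hq : 0 < q.length)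
    (hd : d.IsPath) (hdD : ∀ z ∈ d.support, z ∈ D.toSubgraph.verts → z = x ∨ z = y)
    (hqd : q.length < d.length) :
    ∃ D' : Subdivision M G, ∑ e, (D.P e).length < ∑ e, (D'.P e).length := by
  classical
  have hx : x ∈ (D.P e).support := by simp [hP]
  have hy : y ∈ (D.P e).support := by simp [hP]
  have hp : ∀ z, z ∈ p.support ∨ z ∈ r.support → z ∈ (D.P e).support := by
    intro z hz
    simp only [hP, Walk.mem_support_append_iff]
    tauto
  have hdp : ∀ z ∈ d.support, z ∈ p.support ∨ z ∈ r.support → z = x ∨ z = y :=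
    fun z hz hz' => hdD z hz (D.mem_verts_of_mem_support (hp z hz'))
  have hsub : ∀ z ∈ ((p.append d).append r).support, z ∈ D.toSubgraph.verts →
      z ∈ (D.P e).support := by
    intro z hz hzD
    simp only [Walk.mem_support_append_iff] at hz
    rcases hz with (hz | hz) | hz
    · exact hp z (Or.inl hz)
    · rcases hdD z hz hzD with rfl | rfl
      exacts [hx, hy]
    · exact hp z (Or.inr hz)
  have hedge : ∀ e' ≠ e, ∀ a ∈ ((p.append d).append r).edges, a ∉ (D.P e').edges := by
    intro e' he' a ha ha'
    by_cases had : a ∈ d.edges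
    · induction a with
      | _ s t =>
        have hs := hdD s (d.fst_mem_support_of_mem_edges had)
          (D.mem_verts_of_mem_support (Walk.fst_mem_support_of_mem_edges _ ha'))
        have ht := hdD t (d.snd_mem_support_of_mem_edges had)
          (D.mem_verts_of_mem_support (Walk.snd_mem_support_of_mem_edges _ ha'))
        have hst := (d.adj_of_mem_edges had).ne
        have : d.length = 1 := by
          refine hd.length_eq_one_of_mem_edges ?_
          rcases hs with rfl | rfl <;> rcases ht with rfl | rfl
          · exact absurd rfl hst
          · exact had
          · exact Sym2.eq_swap ▸ had
          · exact absurd rfl hst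
        omega
    · refine D.edges_disjoint e e' he'.symm a ?_ ha'
      simp only [hP, Walk.edges_append, List.mem_append] at ha ⊢
      tauto
  refine ⟨⟨D.b, D.u, D.v, Function.update D.P e ((p.append d).append r), D.injective, D.ends_eq,
    fun e' h => ?_, fun e' h => ?_, fun e' => ?_, fun e' e'' h => ?_, fun e' e'' h => ?_⟩, ?_⟩
  · have h' := D.isCycle e' h
    rcases eq_or_ne e' e with rfl | he
    · rw [Walk.isCycle_copy_iff] at h' ⊢
      rw [Function.update_self]
      rw [hP] at h'
      refine ⟨?_, Walk.support_tail_nodup_replace h'.2 hq hd hdp⟩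
      have := h'.1
      simp only [Walk.length_append] at this ⊢
      omega
    · rwa [Walk.isCycle_copy_iff, Function.update_of_ne he, ← Walk.isCycle_copy_iff]
  · have h' := D.isPath e' h
    rcases eq_or_ne e' e with rfl | he
    · rw [Function.update_self]
      rw [hP] at h'
      exact h'.replace hq hd hdp
    · rwa [Function.update_of_ne he]
  · rcases eq_or_ne e' e with rfl | he
    · rw [Function.update_self]
      exact fun z hz hzb => D.eq_of_branch _ z (hsub z hz (Or.inl hzb)) hzb
    · rw [Function.update_of_ne he]
      exact D.eq_of_branch e'
  · rcases eq_or_ne e' e with rfl | he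
    · rw [Function.update_self, Function.update_of_ne h.symm]
      exact fun z hz hz' => D.mem_range_of_ne _ _ h z
        (hsub z hz (D.mem_verts_of_mem_support hz')) hz'
    · rw [Function.update_of_ne he]
      rcases eq_or_ne e'' e with rfl | he'
      · rw [Function.update_self]
        exact fun z hz hz' => D.mem_range_of_ne _ _ h z hz
          (hsub z hz' (D.mem_verts_of_mem_support hz))
      · rw [Function.update_of_ne he']
        exact D.mem_range_of_ne e' e'' h
  · rcases eq_or_ne e' e with rfl | he
    · rw [Function.update_self, Function.update_of_ne h.symm]
      exact hedge e'' h.symm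
    · rw [Function.update_of_ne he]
      rcases eq_or_ne e'' e with rfl | he'
      · rw [Function.update_self]
        exact fun a ha ha' => hedge e' h a ha' ha
      · rw [Function.update_of_ne he']
        exact D.edges_disjoint e' e'' h
  · refine Finset.sum_lt_sum (fun e' _ => ?_) ⟨e, Finset.mem_univ e, ?_⟩
    · rcases eq_or_ne e' e with rfl | he
      · simp only [Function.update_self, hP, Walk.length_append]
        omega
      · simp only [Function.update_of_ne he, le_refl]
    · simp only [Function.update_self, hP, Walk.length_append]
      omega

/-- The vertex set of a subdivision of a connected multigraph is connected. -/
lemma exists_walk (hM : M.Connected) {x y : V} (hx : x ∈ D.toSubgraph.verts)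
    (hy : y ∈ D.toSubgraph.verts) :
    ∃ p : G.Walk x y, ∀ z ∈ p.support, z ∈ D.toSubgraph.verts := by
  classical
  have branch : ∀ w w', ∃ p : G.Walk (D.b w) (D.b w'), ∀ z ∈ p.support, z ∈ D.toSubgraph.verts := by
    intro w w'
    induction hM.2 w w' with
    | refl => exact ⟨.nil, by simp [D.b_mem_verts]⟩
    | @tail s t _ hst ih =>
      obtain ⟨p, hp⟩ := ih
      obtain ⟨e, he⟩ := hst
      have : ∃ q : G.Walk (D.b s) (D.b t), ∀ z ∈ q.support, z ∈ (D.P e).support := by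
        rw [D.ends_eq, Sym2.eq_iff] at he
        rcases he with ⟨rfl, rfl⟩ | ⟨rfl, rfl⟩
        · exact ⟨D.P e, fun z hz => hz⟩
        · exact ⟨(D.P e).reverse, fun z hz => by simpa using hz⟩
      obtain ⟨q, hq⟩ := this
      refine ⟨p.append q, fun z hz => ?_⟩
      rw [Walk.mem_support_append_iff] at hz
      exact hz.elim (hp z) fun hz => D.mem_verts_of_mem_support (hq z hz)
  have toBranch : ∀ x ∈ D.toSubgraph.verts, ∃ (w : W) (p : G.Walk x (D.b w)),
      ∀ z ∈ p.support, z ∈ D.toSubgraph.verts := by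
    rintro x (⟨w, rfl⟩ | hx)
    · exact ⟨w, .nil, by simp [D.b_mem_verts]⟩
    · obtain ⟨e, he⟩ := Set.mem_iUnion.1 hx
      exact ⟨_, (D.P e).dropUntil x he, fun z hz =>
        D.mem_verts_of_mem_support ((D.P e).support_dropUntil_subset_support he hz)⟩
  obtain ⟨w, p, hp⟩ := toBranch x hx
  obtain ⟨w', q, hq⟩ := toBranch y hy
  obtain ⟨r, hr⟩ := branch w w'
  refine ⟨p.append (r.append q.reverse), fun z hz => ?_⟩
  simp only [Walk.mem_support_append_iff, Walk.support_reverse, List.mem_reverse] at hz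
  rcases hz with hz | hz | hz
  exacts [hp z hz, hr z hz, hq z hz]

lemma getVert_inj {e : F} {k l : ℕ} (hk : k < (D.P e).length) (hl : l < (D.P e).length)
    (h : (D.P e).getVert k = (D.P e).getVert l) : k = l := by
  by_cases he : D.u e = D.v e
  · exact (D.isCycle e he).getVert_injOn' (by simp; omega) (by simp; omega) (by simpa using h)
  · exact (D.isPath e he).getVert_injOn hk.le hl.le h

lemma getVert_notMem_range {e : F} {k : ℕ} (hk₀ : k ≠ 0) (hk : k < (D.P e).length) :
    (D.P e).getVert k ∉ Set.range D.b := by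
  have h₀ : (D.P e).getVert k ≠ D.b (D.u e) := fun h =>
    hk₀ (D.getVert_inj hk (by omega) (by simpa using h))
  intro h
  have h₁ := (D.eq_of_branch e _ ((D.P e).getVert_mem_support k) h).resolve_left h₀
  by_cases he : D.u e = D.v e
  · exact h₀ (h₁.trans (congrArg D.b he.symm))
  · have := (D.isPath e he).getVert_injOn hk.le (le_refl (D.P e).length) (by simpa using h₁)
    omega

lemma sum_length_le [Finite V] [Fintype F] :
    ∑ e, (D.P e).length ≤ Fintype.card F + D.toSubgraph.verts.ncard := by
  let f : (Σ e, Fin ((D.P e).length - 1)) → D.toSubgraph.verts := fun x =>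
    ⟨(D.P x.1).getVert (x.2 + 1), D.mem_verts_of_mem_support ((D.P x.1).getVert_mem_support _)⟩
  have hf : Function.Injective f := by
    rintro ⟨e, k⟩ ⟨e', k'⟩ h
    have h' : (D.P e).getVert (k + 1) = (D.P e').getVert (k' + 1) := congrArg Subtype.val h
    obtain rfl : e = e' := by
      by_contra he
      refine D.getVert_notMem_range (e := e) (k := k + 1) (by omega) (by omega)
        (D.mem_range_of_ne e e' he _ ((D.P e).getVert_mem_support _) ?_)
      rw [h']
      exact (D.P e').getVert_mem_support _
    have := D.getVert_inj (by omega) (by omega) h'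
    rw [Sigma.mk.injEq]
    exact ⟨rfl, heq_of_eq (Fin.ext (by omega))⟩
  have := Nat.card_le_card_of_injective f hf
  rw [Nat.card_eq_fintype_card, Fintype.card_sigma, Nat.card_coe_set_eq] at this
  simp only [Fintype.card_fin] at this
  calc ∑ e, (D.P e).length ≤ ∑ e : F, (1 + ((D.P e).length - 1)) :=
        Finset.sum_le_sum fun e _ => by omega
    _ ≤ _ := by
        rw [Finset.sum_add_distrib]
        simpa using this

lemma exists_mem_support_of_mem_verts [Nonempty F] (hM : M.Connected) {x : V}
    (hx : x ∈ D.toSubgraph.verts) : ∃ e, x ∈ (D.P e).support := by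
  rcases hx with ⟨w, rfl⟩ | hx
  · have : ∃ e, w = D.u e ∨ w = D.v e := by
      obtain ⟨e⟩ := ‹Nonempty F›
      by_cases h : w = D.u e
      · exact ⟨e, Or.inl h⟩
      · rcases Relation.ReflTransGen.cases_head (hM.2 w (D.u e)) with h' | ⟨c, ⟨e', he'⟩, -⟩
        · exact absurd h' h
        · rw [D.ends_eq, Sym2.eq_iff] at he'
          exact ⟨e', by tauto⟩
    obtain ⟨e, rfl | rfl⟩ := this
    exacts [⟨e, (D.P e).start_mem_support⟩, ⟨e, (D.P e).end_mem_support⟩]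
  · simpa using hx

end Subdivision

namespace SimpleGraph.Walk

variable {V : Type*} {G : SimpleGraph V}

lemma IsCycle.exists_long_path {u x y : V} {c : G.Walk u u} (hc : c.IsCycle)
    (hx : x ∈ c.support) (hy : y ∈ c.support) (hxy : x ≠ y) :
    ∃ q : G.Walk x y, q.IsPath ∧ q.support ⊆ c.support ∧ c.length ≤ 2 * q.length := by
  have h3 := hc.three_le_length
  have index : ∀ z ∈ c.support, ∃ i < c.length, c.getVert i = z := by
    intro z hz
    obtain ⟨i, rfl, hi⟩ := mem_support_iff_exists_getVert.1 hz
    rcases hi.lt_or_eq with h | rfl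
    · exact ⟨i, h, rfl⟩
    · exact ⟨0, by omega, by simp⟩
  obtain ⟨i, hi, rfl⟩ := index x hx
  obtain ⟨j, hj, rfl⟩ := index y hy
  rcases lt_trichotomy i j with h | rfl | h
  · obtain ⟨q, hq, hqc, hl⟩ := hc.exists_long_arc h hj
    exact ⟨q, hq, hqc, by omega⟩
  · exact absurd rfl hxy
  · obtain ⟨q, hq, hqc, hl⟩ := hc.exists_long_arc h hi
    exact ⟨q.reverse, hq.reverse, by simpa using hqc, by rw [length_reverse]; omega⟩

/-- A walk from `A` to `B` contains a path from `A` to `B` with no other vertex in `A` or `B`. -/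
lemma exists_trimmed_path {A B : Set V} {a b : V} (p : G.Walk a b) (ha : a ∈ A) (hb : b ∈ B) :
    ∃ a' ∈ A, ∃ b' ∈ B, ∃ q : G.Walk a' b', q.IsPath ∧ q.support ⊆ p.support ∧
      (∀ x ∈ q.support, x ∈ A → x = a') ∧ ∀ x ∈ q.support, x ∈ B → x = b' := by
  obtain ⟨a', ha', q, -, hqp, hqA⟩ := p.reverse.exists_path_to_first A ⟨a, by simp, ha⟩
  obtain ⟨b', hb', r, hr, hrq, hrB⟩ := q.reverse.exists_path_to_first B ⟨b, by simp, hb⟩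
  rw [support_reverse] at hqp hrq
  exact ⟨a', ha', b', hb', r, hr, fun x hx => by simpa using hqp (by simpa using hrq hx),
    fun x hx hxA => hqA x (by simpa using hrq hx) hxA, hrB⟩

lemma IsPath.append_of_inter {x y z : V} {p : G.Walk x y} {q : G.Walk y z} (hp : p.IsPath)
    (hq : q.IsPath) (h : ∀ w ∈ p.support, w ∈ q.support → w = y) : (p.append q).IsPath := by
  rw [isPath_def, support_append, List.nodup_append']
  refine ⟨hp.support_nodup, hq.support_nodup.tail, fun w hw hw' => ?_⟩
  obtain rfl := h w hw (List.mem_of_mem_tail hw')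
  exact hq.start_notMem_support_tail hw'

end SimpleGraph.Walk

namespace Subdivision

variable {V W F : Type*} {M : Multigraph W F} {G H : SimpleGraph V} (D : Subdivision M G)

/-- A subdivided edge can be rerouted through a long cycle that is disjoint from the subdivision and
well connected to a short segment of the subdivided edge. -/
lemma exists_reroute_of_cycle [Fintype F] (hHG : H ≤ G) {w : V} {c : H.Walk w w} (hc : c.IsCycle)
    (hcD : ∀ x ∈ c.support, x ∉ D.toSubgraph.verts) (e : F) {I : Set ℕ} {g : ℕ}
    (hg : 2 * g ≤ c.length) (hI : ∀ k ∈ I, k ≤ (D.P e).length)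
    (hIg : ∀ k ∈ I, ∀ l ∈ I, k < l → l - k ≤ g)
    (h : ∀ z, ∃ a ∈ c.support, ∃ b ∈ (D.P e).getVert '' I, ∃ p : H.Walk a b,
      (∀ x ∈ p.support, x ∈ D.toSubgraph.verts → x ∈ (D.P e).getVert '' I) ∧ z ∉ p.support) :
    ∃ D' : Subdivision M G, ∑ e, (D.P e).length < ∑ e, (D'.P e).length := by
  classical
  have : Nonempty V := ⟨w⟩
  have hconn : ∀ a ∈ {x | x ∈ c.support}, ∀ a' ∈ {x | x ∈ c.support},
      ∃ p : H.Walk a a', ∀ x ∈ p.support, x ∈ {x | x ∈ c.support} := by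
    intro a ha a' ha'
    refine ⟨(c.takeUntil a ha).reverse.append (c.takeUntil a' ha'), fun x hx => ?_⟩
    simp only [Walk.mem_support_append_iff, Walk.support_reverse, List.mem_reverse] at hx
    exact hx.elim (fun h => c.support_takeUntil_subset_support ha h)
      (fun h => c.support_takeUntil_subset_support ha' h)
  obtain ⟨a₁, ha₁, a₂, ha₂, b₁, hb₁, b₂, hb₂, p₁, p₂, hp₁, hp₂, hp₁₂⟩ :=
    Walk.exists_two_disjoint_paths (B := (D.P e).getVert '' I)
      (S := {x | x ∈ D.toSubgraph.verts → x ∈ (D.P e).getVert '' I}) hconn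
      (fun x hx hxD => absurd hxD (hcD x hx)) h
  obtain ⟨x₁, hx₁, y₁, hy₁, q₁, hq₁, hqp₁, hqA₁, hqB₁⟩ := p₁.exists_trimmed_path ha₁ hb₁
  obtain ⟨x₂, hx₂, y₂, hy₂, q₂, hq₂, hqp₂, hqA₂, hqB₂⟩ := p₂.exists_trimmed_path ha₂ hb₂
  have hdisj : ∀ z ∈ q₁.support, z ∉ q₂.support := fun z h₁ h₂ => hp₁₂ z (hqp₁ h₁) (hqp₂ h₂)
  have hx : x₁ ≠ x₂ := by
    rintro rfl
    exact hdisj _ q₁.start_mem_support q₂.start_mem_support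
  have hy : y₁ ≠ y₂ := by
    rintro rfl
    exact hdisj _ q₁.end_mem_support q₂.end_mem_support
  obtain ⟨r, hr, hrc, hrl⟩ := hc.exists_long_path hx₁ hx₂ hx
  have hd : (q₁.reverse.append (r.append q₂)).IsPath := by
    refine hq₁.reverse.append_of_inter
      (hr.append_of_inter hq₂ fun z hz hz' => hqA₂ z hz' (hrc hz)) fun z hz hz' => ?_
    rw [Walk.support_reverse, List.mem_reverse] at hz
    rw [Walk.mem_support_append_iff] at hz'
    exact hz'.elim (fun h => hqA₁ z hz (hrc h)) fun h => absurd h (hdisj z hz)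
  have hdD : ∀ z ∈ (q₁.reverse.append (r.append q₂)).support, z ∈ D.toSubgraph.verts →
      z = y₁ ∨ z = y₂ := by
    intro z hz hzD
    simp only [Walk.mem_support_append_iff, Walk.support_reverse, List.mem_reverse] at hz
    rcases hz with hz | hz | hz
    · exact Or.inl (hqB₁ z hz (hp₁ z (hqp₁ hz) hzD))
    · exact absurd hzD (hcD z (hrc hz))
    · exact Or.inr (hqB₂ z hz (hp₂ z (hqp₂ hz) hzD))
  have hdl : g < (q₁.reverse.append (r.append q₂)).length := by
    have : 0 < q₁.length := by
      by_contra hl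
      obtain rfl := q₁.eq_of_length_eq_zero (by omega)
      obtain ⟨k, -, rfl⟩ := hy₁
      exact hcD _ hx₁ (D.mem_verts_of_mem_support ((D.P e).getVert_mem_support k))
    simp only [Walk.length_append, Walk.length_reverse]
    omega
  generalize q₁.reverse.append (r.append q₂) = d at hd hdD hdl
  obtain ⟨k, hk, rfl⟩ := hy₁
  obtain ⟨l, hl, rfl⟩ := hy₂
  rcases lt_trichotomy k l with hkl | rfl | hkl
  · obtain ⟨p, q, r, hP, -, hq⟩ := (D.P e).exists_append_append_getVert k l hkl.le (hI l hl)
    have := hIg k hk l hl hkl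
    exact D.exists_reroute (d := d.mapLe hHG) hP (by omega) (by simpa using hd)
      (by simpa using hdD) (by rw [Walk.length_mapLe]; omega)
  · exact absurd rfl hy
  · obtain ⟨p, q, r, hP, -, hq⟩ := (D.P e).exists_append_append_getVert l k hkl.le (hI k hk)
    have := hIg l hl k hk hkl
    exact D.exists_reroute (d := d.reverse.mapLe hHG) hP (by omega) (by simpa using hd)
      (by simpa [or_comm] using hdD) (by rw [Walk.length_mapLe, Walk.length_reverse]; omega)

lemma nonempty_edges_of_one_lt_ncard (hM : M.Connected) (h : 1 < D.toSubgraph.verts.ncard) :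
    Nonempty F := by
  by_contra hF
  rw [not_nonempty_iff] at hF
  obtain ⟨w⟩ := hM.1
  have hw : ∀ w', w' = w := fun w' =>
    (Relation.ReflTransGen.cases_head (hM.2 w' w)).resolve_right fun ⟨_, ⟨e, _⟩, _⟩ => hF.elim e
  have : D.toSubgraph.verts ⊆ {D.b w} := by
    rintro x (⟨w', rfl⟩ | hx)
    · rw [hw w']
      rfl
    · exact hF.elim (Set.mem_iUnion.1 hx).choose
  have := Set.ncard_le_ncard this
  rw [Set.ncard_singleton] at this
  omega

/-- A subdivision can be enlarged if it is disjoint from a long cycle and separations are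
unbalanced. -/
lemma exists_longer_of_cycle [Fintype V] [Fintype F] [Nonempty F] (hM : M.Connected) (hHG : H ≤ G)
    {T : Set V} (hH : H.support ⊆ T) {N : ℝ} {g : ℕ} (hg : 0 < g)
    (hexp : ∀ A B Z : Finset V, A.Nonempty → B.Nonempty → ↑A ⊆ T → ↑B ⊆ T →
      (∀ a ∈ A, ∀ b ∈ B, ∀ p : H.Walk a b, ∃ z ∈ Z, z ∈ p.support) →
      (A.card : ℝ) < N * Z.card ∨ (B.card : ℝ) < N * Z.card)
    (hN : 0 ≤ N) (hDT : D.toSubgraph.verts ⊆ T) {w : V} {c : H.Walk w w} (hc : c.IsCycle)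
    (hcD : ∀ x ∈ c.support, x ∉ D.toSubgraph.verts) (hcg : 2 * (g - 1) ≤ c.length)
    (hcV : c.length ≤ D.toSubgraph.verts.ncard)
    (hcN : N * (∑ e, ((D.P e).length / g + 1) : ℕ) ≤ c.length) :
    ∃ D' : Subdivision M G, ∑ e, (D.P e).length < ∑ e, (D'.P e).length := by
  classical
  let I : (Σ e, Fin ((D.P e).length / g + 1)) → Set ℕ := fun t =>
    {k | k ≤ (D.P t.1).length ∧ k / g = t.2}
  by_cases hblock : ∃ t, ∀ z, ∃ a ∈ c.support, ∃ b ∈ (D.P t.1).getVert '' I t, ∃ p : H.Walk a b,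
      (∀ x ∈ p.support, x ∈ D.toSubgraph.verts → x ∈ (D.P t.1).getVert '' I t) ∧ z ∉ p.support
  · obtain ⟨t, ht⟩ := hblock
    refine D.exists_reroute_of_cycle hHG hc hcD t.1 hcg (fun k hk => hk.1) ?_ ht
    rintro k ⟨-, hk⟩ l ⟨-, hl⟩ -
    have h₁ := Nat.div_add_mod k g
    have h₂ := Nat.div_add_mod l g
    have h₃ := Nat.mod_lt l hg
    rw [hk] at h₁
    rw [hl] at h₂
    omega
  · push Not at hblock
    choose z hz using hblock
    have hZ : ((Finset.univ.image z).card : ℝ) ≤ (∑ e, ((D.P e).length / g + 1) : ℕ) := by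
      rw [Nat.cast_le]
      refine Finset.card_image_le.trans ?_
      simp
    have hAcard : c.support.tail.toFinset.card = c.length := by
      rw [List.toFinset_card_of_nodup hc.support_nodup]
      simp
    have h3 := hc.three_le_length
    have hZN := mul_le_mul_of_nonneg_left hZ hN
    have hcV' : (c.length : ℝ) ≤ D.toSubgraph.verts.toFinset.card := by
      rw [← Set.ncard_eq_toFinset_card']
      exact_mod_cast hcV
    have := hexp c.support.tail.toFinset D.toSubgraph.verts.toFinset (Finset.univ.image z)
      (Finset.card_pos.1 (by omega)) ⟨D.b hM.1.some, by simp [D.b_mem_verts]⟩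
      (fun x hx => hH (Walk.mem_support_of_not_nil hc.not_nil
        (List.mem_of_mem_tail (by simpa using hx)))) (by simpa using hDT) ?_
    · rw [hAcard] at this
      rcases this with h | h <;> linarith
    · intro a ha b hb p
      obtain ⟨x, hx, q, hqp, hqx⟩ := p.exists_walk_to_first D.toSubgraph.verts
        ⟨b, p.end_mem_support, by simpa using hb⟩
      obtain ⟨e, he⟩ := D.exists_mem_support_of_mem_verts hM hx
      obtain ⟨k, rfl, hk⟩ := Walk.mem_support_iff_exists_getVert.1 he
      have hk' : k / g < (D.P e).length / g + 1 := Nat.lt_succ_of_le (Nat.div_le_div_right hk)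
      have hxB : (D.P e).getVert k ∈ (D.P e).getVert '' I ⟨e, ⟨k / g, hk'⟩⟩ := ⟨k, ⟨hk, rfl⟩, rfl⟩
      refine ⟨z ⟨e, ⟨k / g, hk'⟩⟩, by simp, hqp (hz _ a ?_ _ hxB q fun y hy hyD => ?_)⟩
      · exact List.mem_of_mem_tail (by simpa using ha)
      · rw [hqx y hy hyD]
        exact hxB

end Subdivision

namespace SimpleGraph

variable {V : Type*} {G : SimpleGraph V}

/-- The graph `G` with the vertices in `U` isolated. -/
def isolate (G : SimpleGraph V) (U : Set V) : SimpleGraph V where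
  Adj x y := G.Adj x y ∧ x ∉ U ∧ y ∉ U
  symm := ⟨fun _ _ h => ⟨h.1.symm, h.2.2, h.2.1⟩⟩
  loopless := ⟨fun _ h => h.1.ne rfl⟩

lemma isolate_le (U : Set V) : G.isolate U ≤ G := fun _ _ h => h.1

lemma support_isolate_subset (U : Set V) : (G.isolate U).support ⊆ Uᶜ :=
  fun _ ⟨_, h⟩ => h.2.1

lemma Walk.exists_isolate {U : Set V} {x y : V} (p : G.Walk x y) (hp : ∀ z ∈ p.support, z ∉ U) :
    ∃ q : (G.isolate U).Walk x y, q.support = p.support := by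
  refine ⟨p.transfer _ fun e he => ?_, p.support_transfer _⟩
  induction e with
  | _ s t => exact ⟨p.adj_of_mem_edges he, hp s (p.fst_mem_support_of_mem_edges he),
      hp t (p.snd_mem_support_of_mem_edges he)⟩

/-- After removing a maximal `U` for which few vertices `Y` of `U` meet all members of a pairwise
intersecting family of connected sets that meet `U`, all separations are unbalanced. -/
lemma exists_pretransversal_expansion [Fintype V] {𝓕 : Set (Set V)}
    (hconn : ∀ Q ∈ 𝓕, ∀ x ∈ Q, ∀ y ∈ Q, ∃ p : G.Walk x y, ∀ z ∈ p.support, z ∈ Q)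
    (hint : ∀ Q ∈ 𝓕, ∀ R ∈ 𝓕, (Q ∩ R).Nonempty) {N : ℝ} (hN : 0 ≤ N) :
    ∃ U Y : Finset V, N * Y.card ≤ U.card ∧
      (∀ Q ∈ 𝓕, (∀ x ∈ Q, x ∉ U) ∨ ∃ y ∈ Y, y ∈ Q) ∧
      ∀ A B Z : Finset V, A.Nonempty → B.Nonempty → (A : Set V) ⊆ (↑U)ᶜ → (B : Set V) ⊆ (↑U)ᶜ →
        (∀ a ∈ A, ∀ b ∈ B, ∀ p : (G.isolate U).Walk a b, ∃ z ∈ Z, z ∈ p.support) →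
        (A.card : ℝ) < N * Z.card ∨ (B.card : ℝ) < N * Z.card := by
  classical
  let P : Set (Finset V × Finset V) := {x | N * x.2.card ≤ x.1.card ∧
    ∀ Q ∈ 𝓕, (∀ v ∈ Q, v ∉ x.1) ∨ ∃ y ∈ x.2, y ∈ Q}
  have hP : P.Nonempty := ⟨(∅, ∅), by simp, fun Q _ => Or.inl (by simp)⟩
  obtain ⟨⟨U, Y⟩, ⟨hUY, hUQ⟩, hmax⟩ :=
    (Set.toFinite P).exists_maximalFor (fun x => x.1.card) P hP
  refine ⟨U, Y, hUY, hUQ, fun A B Z hA hB hAU hBU hsep => ?_⟩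
  by_contra! hZ
  have extend : ∀ A : Finset V, A.Nonempty → (A : Set V) ⊆ (↑U)ᶜ → N * Z.card ≤ A.card →
      ∃ Q ∈ 𝓕, (∀ x ∈ Q, x ∉ U) ∧ (∀ z ∈ Z, z ∉ Q) ∧ ∃ a ∈ A, a ∈ Q := by
    intro A hA hAU hZA
    by_contra! hno
    have hdisj : Disjoint U A := Finset.disjoint_right.2 fun a ha => hAU ha
    have hlt : U.card < (U ∪ Z ∪ A).card := by
      refine Finset.card_lt_card (Finset.ssubset_iff_of_subset (fun x hx => by simp [hx]) |>.2 ?_)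
      obtain ⟨a, ha⟩ := hA
      exact ⟨a, by simp [ha], hAU ha⟩
    have hmem : (U ∪ Z ∪ A, Y ∪ Z \ U) ∈ P := by
      refine ⟨?_, fun Q hQ => ?_⟩
      · have h₁ : ((Y ∪ Z \ U).card : ℝ) ≤ Y.card + Z.card := by
          exact_mod_cast (Finset.card_union_le _ _).trans
            (Nat.add_le_add_left (Finset.card_le_card Finset.sdiff_subset) _)
        have h₂ : (U.card : ℝ) + A.card ≤ (U ∪ Z ∪ A).card := by
          rw [← Nat.cast_add, Nat.cast_le, ← Finset.card_union_of_disjoint hdisj]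
          exact Finset.card_le_card fun x hx => by
            simp only [Finset.mem_union] at hx ⊢
            tauto
        have := mul_le_mul_of_nonneg_left h₁ hN
        simp only
        linarith
      · rcases hUQ Q hQ with h | ⟨y, hy, hyQ⟩
        · by_cases hZQ : ∃ z ∈ Z, z ∈ Q
          · obtain ⟨z, hz, hzQ⟩ := hZQ
            exact Or.inr ⟨z, by simp [hz, h z hzQ], hzQ⟩
          · push Not at hZQ
            refine Or.inl fun v hv => ?_
            simp only [Finset.mem_union, not_or]
            exact ⟨⟨h v hv, fun hvZ => hZQ v hvZ hv⟩, fun hvA => hno Q hQ h hZQ v hvA hv⟩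
        · exact Or.inr ⟨y, by simp [hy], hyQ⟩
    exact absurd (hmax hmem hlt.le) hlt.not_ge
  obtain ⟨Q, hQ, hQU, hQZ, a, ha, haQ⟩ := extend A hA hAU hZ.1
  obtain ⟨R, hR, hRU, hRZ, b, hb, hbR⟩ := extend B hB hBU hZ.2
  obtain ⟨x, hxQ, hxR⟩ := hint Q hQ R hR
  obtain ⟨p, hp⟩ := hconn Q hQ a haQ x hxQ
  obtain ⟨q, hq⟩ := hconn R hR x hxR b hbR
  obtain ⟨p', hp'⟩ := p.exists_isolate fun z hz => hQU z (hp z hz)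
  obtain ⟨q', hq'⟩ := q.exists_isolate fun z hz => hRU z (hq z hz)
  obtain ⟨z, hz, hzp⟩ := hsep a ha b hb (p'.append q')
  rw [Walk.mem_support_append_iff, hp', hq'] at hzp
  exact hzp.elim (fun h => hQZ z hz (hp z h)) fun h => hRZ z hz (hq z h)

end SimpleGraph

namespace Subdivision

variable {V W F : Type*} {M : Multigraph W F} {G : SimpleGraph V} (D : Subdivision M G)

lemma sum_length_div_le [Fintype V] [Fintype F] {N : ℝ} {g : ℕ} (hN : 0 < N) (hg : N ^ 2 ≤ g)
    (hm : Fintype.card F ≤ N) (hD : D.toSubgraph.verts.ncard + Fintype.card F ≤ N ^ 3) :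
    N * (∑ e, ((D.P e).length / g + 1) : ℕ) ≤ 2 * N ^ 2 := by
  have hg0 : (0 : ℝ) < g := lt_of_lt_of_le (by positivity) hg
  have hsum : ((∑ e, (D.P e).length : ℕ) : ℝ) ≤ N ^ 3 := by
    have := D.sum_length_le
    have : ((∑ e, (D.P e).length : ℕ) : ℝ) ≤ Fintype.card F + D.toSubgraph.verts.ncard := by
      exact_mod_cast this
    linarith
  have h1 : ((∑ e, ((D.P e).length / g + 1) : ℕ) : ℝ) ≤ N + N := by
    calc ((∑ e, ((D.P e).length / g + 1) : ℕ) : ℝ)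
        ≤ ∑ e, (((D.P e).length : ℝ) / g + 1) := by
          push_cast
          gcongr
          exact Nat.cast_div_le
      _ = ((∑ e, (D.P e).length : ℕ) : ℝ) / g + Fintype.card F := by
          simp [Finset.sum_add_distrib, Finset.sum_div]
      _ ≤ N + N := by
          gcongr
          rw [div_le_iff₀ hg0]
          nlinarith
  nlinarith

end Subdivision

lemma IsMaxSubdivisionIn.sum_length_le {V W F : Type*} [Fintype F] {M : Multigraph W F}
    {G : SimpleGraph V} {D : Subdivision M G} (hD : IsMaxSubdivisionIn M G ⊤ D.toSubgraph)
    (D' : Subdivision M G) : ∑ e, (D'.P e).length ≤ ∑ e, (D.P e).length := by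
  rw [← D.ncard_edgeSet, ← D'.ncard_edgeSet]
  exact hD.2.2 _ D'.isSubdivisionIn_toSubgraph le_top

namespace SimpleGraph

/-- If the maximum `M`-subdivisions pairwise intersect and `G - U` expands, then those avoiding `U`
have a small transversal. -/
lemma exists_hitting_of_expansion {V W F : Type*} [Fintype V] [Fintype F] {M : Multigraph W F}
    (hM : M.Connected) {G : SimpleGraph V} (hpi : PairwiseIntersectingIn M G ⊤) {U : Finset V}
    {N : ℝ} (hN : 1 ≤ N) (hn : (Fintype.card V : ℝ) = N ^ 3) (hm : Fintype.card F ≤ N)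
    (hexp : ∀ A B Z : Finset V, A.Nonempty → B.Nonempty → (A : Set V) ⊆ (↑U)ᶜ →
      (B : Set V) ⊆ (↑U)ᶜ →
      (∀ a ∈ A, ∀ b ∈ B, ∀ p : (G.isolate U).Walk a b, ∃ z ∈ Z, z ∈ p.support) →
      (A.card : ℝ) < N * Z.card ∨ (B.card : ℝ) < N * Z.card) :
    ∃ S : Finset V, (S.card : ℝ) ≤ 4 * N ^ 2 ∧ ∀ Q, IsMaxSubdivisionIn M G ⊤ Q →
      (∀ x ∈ Q.verts, x ∉ U) → ∃ x ∈ S, x ∈ Q.verts := by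
  classical
  by_contra! hno
  have hN2 : 1 ≤ N ^ 2 := one_le_pow₀ hN
  let 𝓛 : Set (Set V) :=
    {X | ∃ Q, IsMaxSubdivisionIn M G ⊤ Q ∧ (∀ x ∈ Q.verts, x ∉ U) ∧ Q.verts = X}
  have hconn : ∀ X ∈ 𝓛, ∀ x ∈ X, ∀ y ∈ X,
      ∃ p : (G.isolate U).Walk x y, ∀ z ∈ p.support, z ∈ X := by
    rintro _ ⟨Q, hQ, hQU, rfl⟩ x hx y hy
    obtain ⟨D, rfl⟩ := hQ.1.exists_eq_toSubgraph
    obtain ⟨p, hp⟩ := D.exists_walk hM hx hy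
    obtain ⟨q, hq⟩ := p.exists_isolate fun z hz => hQU z (hp z hz)
    exact ⟨q, fun z hz => hp z (hq ▸ hz)⟩
  have hint : ∀ X ∈ 𝓛, ∀ Y ∈ 𝓛, (X ∩ Y).Nonempty := by
    rintro _ ⟨Q, hQ, -, rfl⟩ _ ⟨R, hR, -, rfl⟩
    exact hpi Q R hQ hR
  have hs : 2 ≤ ⌊4 * N ^ 2⌋₊ := Nat.le_floor (by push_cast; linarith)
  obtain ⟨v, c, hc, hcl⟩ := exists_long_cycle hconn hint hs fun l hl => by
    obtain ⟨Q, hQ, hQU, hQS⟩ := hno l.toFinset <| by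
      calc (l.toFinset.card : ℝ) ≤ l.length := by exact_mod_cast l.toFinset_card_le
        _ ≤ 4 * N ^ 2 := (Nat.le_floor_iff (by positivity)).1 hl
    exact ⟨_, ⟨Q, hQ, hQU, rfl⟩, fun z hz => hQS z (by simpa using hz)⟩
  have hcl' : 4 * N ^ 2 < c.length := (Nat.lt_floor_add_one _).trans_le (by exact_mod_cast hcl)
  have hg : N ^ 2 ≤ ⌈N ^ 2⌉₊ := Nat.le_ceil _
  have hg' : (⌈N ^ 2⌉₊ : ℝ) < N ^ 2 + 1 := Nat.ceil_lt_add_one (by positivity)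
  have hK : 2 * N ^ 2 ≤ ⌈2 * N ^ 2⌉₊ := Nat.le_ceil _
  have hK' : (⌈2 * N ^ 2⌉₊ : ℝ) < 2 * N ^ 2 + 1 := Nat.ceil_lt_add_one (by positivity)
  have hg0 : 0 < ⌈N ^ 2⌉₊ := Nat.ceil_pos.2 (by positivity)
  obtain ⟨w, d, hd, hdK, hdl⟩ := exists_cycle_length_between (G := G.isolate U) (T := (↑U)ᶜ)
    (support_isolate_subset _) hg0 (N := N) (K := ⌈2 * N ^ 2⌉₊) (by rw [hn]; nlinarith)
    (by linarith) hexp ⟨v, c, hc, Nat.ceil_le.2 (by linarith)⟩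
  have hdK' : 2 * N ^ 2 ≤ d.length := hK.trans (by exact_mod_cast hdK)
  have hdl' : (d.length : ℝ) ≤ 4 * N ^ 2 := by
    rcases hdl with h | h
    · have : (d.length : ℝ) + 3 ≤ 2 * ⌈2 * N ^ 2⌉₊ := by exact_mod_cast h
      linarith
    · have : (d.length : ℝ) + 5 ≤ 4 * ⌈N ^ 2⌉₊ := by exact_mod_cast h
      linarith
  have hcard : d.support.toFinset.card = d.length := by
    have h1 : d.support.toFinset = d.support.tail.toFinset := by
      ext x
      simp only [List.mem_toFinset, d.mem_support_iff (w := x), or_iff_right_iff_imp]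
      rintro rfl
      exact Walk.end_mem_tail_support hd.not_nil
    rw [h1, List.toFinset_card_of_nodup hd.support_nodup]
    simp
  obtain ⟨Q, hQ, hQU, hQd⟩ := hno d.support.toFinset (by rwa [hcard])
  obtain ⟨D, rfl⟩ := hQ.1.exists_eq_toSubgraph
  have hDd : 4 * N ^ 2 < D.toSubgraph.verts.ncard := by
    by_contra! h
    obtain ⟨D₀, hD₀, hD₀U, hD₀D⟩ := hno D.toSubgraph.verts.toFinset (by
      rwa [← Set.ncard_eq_toFinset_card'])
    obtain ⟨x, hx, hx'⟩ := hpi _ _ hQ hD₀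
    exact hD₀D x (by simpa using hx) hx'
  have hdD : d.length ≤ D.toSubgraph.verts.ncard := by
    exact_mod_cast (hdl'.trans hDd.le)
  have hsum : d.length + D.toSubgraph.verts.ncard ≤ Fintype.card V := by
    rw [Set.ncard_eq_toFinset_card', ← hcard, ← Finset.card_union_of_disjoint]
    · exact Finset.card_le_univ _
    · rw [Finset.disjoint_left]
      exact fun x hx hx' => hQd x hx (by simpa using hx')
  have : Nonempty F := D.nonempty_edges_of_one_lt_ncard hM <| by
    have : (1 : ℝ) < D.toSubgraph.verts.ncard := by linarith
    exact_mod_cast this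
  obtain ⟨D', hD'⟩ := D.exists_longer_of_cycle hM (isolate_le _) (support_isolate_subset _) hg0
    hexp (by linarith) (fun x hx => hQU x hx) hd
    (fun x hx => hQd x (by simpa using hx)) (by
      have : (⌈N ^ 2⌉₊ - 1 : ℕ) + (1 : ℝ) = ⌈N ^ 2⌉₊ := by exact_mod_cast Nat.sub_add_cancel hg0
      have : 2 * ((⌈N ^ 2⌉₊ - 1 : ℕ) : ℝ) ≤ d.length := by linarith
      exact_mod_cast this) hdD
    ((D.sum_length_div_le (by linarith) hg hm (by
      have : (d.length : ℝ) + D.toSubgraph.verts.ncard ≤ N ^ 3 := by rw [← hn]; exact_mod_cast hsum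
      nlinarith)).trans hdK')
  exact (hQ.sum_length_le D').not_gt hD'

end SimpleGraph


/-- If `L(M,G)` is pairwise intersecting and `m^3 < n`, then
`τ(M,G) ≤ max {5 n^{2/3}, 2 m^2 n^{1/3}}`. -/
theorem gallai_stmt0 {V W F : Type*} [Fintype V] [Fintype W] [Fintype F]
    (M : Multigraph W F) (hM : M.Connected) (G : SimpleGraph V)
    (hpi : PairwiseIntersectingIn M G ⊤)
    (hn : (Fintype.card F) ^ 3 < Fintype.card V) :
    ∃ S : Set V, IsTransversalIn M G ⊤ S ∧
      (S.ncard : ℝ) ≤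
        max (5 * (Fintype.card V : ℝ) ^ ((2 : ℝ) / 3))
          (2 * (Fintype.card F : ℝ) ^ 2 * (Fintype.card V : ℝ) ^ ((1 : ℝ) / 3)) := by
  classical
  set N : ℝ := (Fintype.card V : ℝ) ^ ((1 : ℝ) / 3) with hNdef
  have hN3 : (Fintype.card V : ℝ) = N ^ 3 := by
    rw [hNdef, ← Real.rpow_natCast, ← Real.rpow_mul (by positivity)]
    norm_num
  have hN2 : (Fintype.card V : ℝ) ^ ((2 : ℝ) / 3) = N ^ 2 := by
    rw [hNdef, ← Real.rpow_natCast, ← Real.rpow_mul (by positivity)]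
    norm_num
  have hN : 1 ≤ N := by
    refine Real.one_le_rpow ?_ (by norm_num)
    exact_mod_cast (Nat.zero_le _).trans_lt hn
  have hm : (Fintype.card F : ℝ) ≤ N := by
    refine (lt_of_pow_lt_pow_left₀ 3 (by linarith) ?_).le
    rw [← hN3]
    exact_mod_cast hn
  obtain ⟨U, Y, hYU, hUY, hexp⟩ := SimpleGraph.exists_pretransversal_expansion (G := G)
    (𝓕 := {X | ∃ Q, IsMaxSubdivisionIn M G ⊤ Q ∧ Q.verts = X}) (N := N)
    (by
      rintro _ ⟨Q, hQ, rfl⟩ x hx y hy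
      obtain ⟨D, rfl⟩ := hQ.1.exists_eq_toSubgraph
      exact D.exists_walk hM hx hy)
    (by
      rintro _ ⟨Q, hQ, rfl⟩ _ ⟨R, hR, rfl⟩
      exact hpi Q R hQ hR)
    (by linarith)
  obtain ⟨S, hS, hSQ⟩ := exists_hitting_of_expansion hM hpi hN hN3 hm hexp
  refine ⟨↑(Y ∪ S), fun Q hQ => ?_, le_max_of_le_left ?_⟩
  · rcases hUY Q.verts ⟨Q, hQ, rfl⟩ with h | ⟨y, hy, hyQ⟩
    · obtain ⟨x, hx, hxQ⟩ := hSQ Q hQ h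
      exact ⟨x, by simp [hx], hxQ⟩
    · exact ⟨y, by simp [hy], hyQ⟩
  · have hY : (Y.card : ℝ) ≤ N ^ 2 := by
      have : (U.card : ℝ) ≤ N ^ 3 := by rw [← hN3]; exact_mod_cast U.card_le_univ
      nlinarith
    have : ((Y ∪ S).card : ℝ) ≤ Y.card + S.card := by exact_mod_cast Finset.card_union_le Y S
    rw [hN2, Set.ncard_coe_finset]
    linarith
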